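/- arXiv:1403.5394 — 2 statements merged into one kernel-verified Lean document; each statement's English description precedes it below -/
import Mathlib

section
/- Three-stage order-3 tableau with c_3 = 1 (Corollary 'co 3 stage'(ii)): let c_2 ∈ (0,1) with c_2 ≠ 2/3. Real numbers b_1, b_2, b_3, a_{31}, a_{32}, β_1, β_2 satisfy b_1 + b_2 + b_3 = 1, b_2 c_2 + b_3 = 1/2, b_2 c_2² + b_3 = 1/3, b_3 a_{32} c_2 = 1/6, a_{31} + a_{32} = 1, β_1 + β_2 = 1, β_2 c_2 = 1/2, if and only if b_1 = (3c_2 − 1)/(6 c_2), b_2 = 1/(6 c_2 (1 − c_2)), b_3 = (2 − 3 c_2)/(6 (1 − c_2)), a_{31} = (3c_2 − 3c_2² − 1)/(c_2(2 − 3c_2)), a_{32} = (1 − c_2)/(c_2(2 − 3c_2)), β_1 = 1 − 1/(2c_2), β_2 = 1/(2c_2). -/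
/-- Three-stage order-3 tableau with `c₃ = 1` (Corollary `co 3 stage`(ii)):
for `c₂ ∈ (0,1)` with `c₂ ≠ 2/3`, the order-3 conditions
`b₁ + b₂ + b₃ = 1`, `b₂ c₂ + b₃ = 1/2`, `b₂ c₂² + b₃ = 1/3`, `b₃ a₃₂ c₂ = 1/6`,
`a₃₁ + a₃₂ = 1`, `β₁ + β₂ = 1`, `β₂ c₂ = 1/2` hold if and only if the coefficients
take the explicit tableau values. -/
theorem stmt13 (c₂ : ℝ) (hc0 : 0 < c₂) (hc1 : c₂ < 1) (hc₂' : c₂ ≠ 2 / 3)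
    (b₁ b₂ b₃ a₃₁ a₃₂ β₁ β₂ : ℝ) :
    (b₁ + b₂ + b₃ = 1 ∧ b₂ * c₂ + b₃ = 1 / 2 ∧ b₂ * c₂ ^ 2 + b₃ = 1 / 3 ∧
        b₃ * a₃₂ * c₂ = 1 / 6 ∧ a₃₁ + a₃₂ = 1 ∧ β₁ + β₂ = 1 ∧ β₂ * c₂ = 1 / 2)
      ↔ (b₁ = (3 * c₂ - 1) / (6 * c₂) ∧ b₂ = 1 / (6 * c₂ * (1 - c₂)) ∧
          b₃ = (2 - 3 * c₂) / (6 * (1 - c₂)) ∧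
          a₃₁ = (3 * c₂ - 3 * c₂ ^ 2 - 1) / (c₂ * (2 - 3 * c₂)) ∧
          a₃₂ = (1 - c₂) / (c₂ * (2 - 3 * c₂)) ∧
          β₁ = 1 - 1 / (2 * c₂) ∧ β₂ = 1 / (2 * c₂)) := by
  have h0 : c₂ ≠ 0 := hc0.ne'
  have h1 : 1 - c₂ ≠ 0 := (sub_pos.mpr hc1).ne'
  have h2 : 2 - 3 * c₂ ≠ 0 := fun h => hc₂' (by linarith)
  constructor
  · rintro ⟨e1, e2, e3, e4, e5, e6, e7⟩
    have hb2 : b₂ = 1 / (6 * c₂ * (1 - c₂)) := by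
      rw [eq_div_iff (by positivity)]
      linear_combination 6 * e2 - 6 * e3
    have hb3 : b₃ = (2 - 3 * c₂) / (6 * (1 - c₂)) := by
      rw [eq_div_iff (by positivity)]
      linear_combination 6 * e3 - 6 * c₂ * e2
    have hb1 : b₁ = (3 * c₂ - 1) / (6 * c₂) := by
      have : b₁ = 1 - b₂ - b₃ := by linarith
      rw [this, hb2, hb3]
      field_simp
      ring
    have ha : a₃₂ = (1 - c₂) / (c₂ * (2 - 3 * c₂)) := by
      rw [eq_div_iff (by positivity)]
      have h3 : b₃ * (6 * (1 - c₂)) = 2 - 3 * c₂ := by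
        rw [hb3]
        field_simp
      linear_combination 6 * (1 - c₂) * e4 - a₃₂ * c₂ * h3
    have hβ : β₂ = 1 / (2 * c₂) := by
      rw [eq_div_iff (by positivity)]
      linear_combination 2 * e7
    refine ⟨hb1, hb2, hb3, ?_, ha, ?_, hβ⟩
    · have : a₃₁ = 1 - a₃₂ := by linarith
      have h4 : c₂ * (2 - 3 * c₂) ≠ 0 := mul_ne_zero h0 h2
      rw [this, ha, eq_div_iff h4, sub_mul, div_mul_cancel₀ _ h4]
      ring
    · rw [← hβ]
      linarith
  · rintro ⟨rfl, rfl, rfl, rfl, rfl, rfl, rfl⟩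
    refine ⟨?_, ?_, ?_, ?_, ?_, ?_, ?_⟩ <;> field_simp <;> ring
end

section
/- Algebraic order barrier for four-stage schemes (algebraic content of Theorem 'th explicit barrier' via Lemma 'le o4 conditions'): let c_2, c_3 ∈ ℝ with 0 < c_2 < c_3 < 1 and c_2 ≠ 2/3. Then there exist no real numbers c_4, b_1, b_2, b_3, b_4, β_1, β_2, β_3, α_{32}, α_{42}, α_{43} satisfying simultaneously the Y-part order-4 conditions: b_1 + b_2 + b_3 + b_4 = 1; b_2 c_2 + b_3 c_3 + b_4 c_4 = 1/2; b_2 c_2² + b_3 c_3² + b_4 c_4² = 1/3; b_2 c_2³ + b_3 c_3³ + b_4 c_4³ = 1/4; b_3 α_{32} c_2 + b_4 α_{42} c_2 + b_4 α_{43} c_3 = 1/6; b_3 c_3 α_{32} c_2 + b_4 c_4 α_{42} c_2 + b_4 c_4 α_{43} c_3 = 1/8; b_3 α_{32} c_2² + b_4 α_{42} c_2² + b_4 α_{43} c_3² = 1/12; b_4 α_{43} α_{32} c_2 = 1/24; and the Z-part order-4 conditions: β_1 + β_2 + β_3 = 1; β_2 c_2 + β_3 c_3 = 1/2; β_2 c_2²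 + β_3 c_3² = 1/3; β_3 α_{32} c_2 = 1/6. -/
/-- Algebraic order barrier for four-stage schemes (algebraic content of Theorem
`th explicit barrier` via Lemma `le o4 conditions`): for `0 < c₂ < c₃ < 1` with
`c₂ ≠ 2/3`, no real coefficients can satisfy simultaneously the `Y`-part order-4
conditions and the `Z`-part order-4 conditions. -/
theorem stmt15 (c₂ c₃ : ℝ) (hc₂ : 0 < c₂) (hc₂₃ : c₂ < c₃) (hc₃ : c₃ < 1)
    (hc₂' : c₂ ≠ 2 / 3) :
    ¬∃ c₄ b₁ b₂ b₃ b₄ β₁ β₂ β₃ α₃₂ α₄₂ α₄₃ : ℝ,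
      -- Y-part order-4 conditions
      (b₁ + b₂ + b₃ + b₄ = 1 ∧
       b₂ * c₂ + b₃ * c₃ + b₄ * c₄ = 1 / 2 ∧
       b₂ * c₂ ^ 2 + b₃ * c₃ ^ 2 + b₄ * c₄ ^ 2 = 1 / 3 ∧
       b₂ * c₂ ^ 3 + b₃ * c₃ ^ 3 + b₄ * c₄ ^ 3 = 1 / 4 ∧
       b₃ * α₃₂ * c₂ + b₄ * α₄₂ * c₂ + b₄ * α₄₃ * c₃ = 1 / 6 ∧
       b₃ * c₃ * α₃₂ * c₂ + b₄ * c₄ * α₄₂ * c₂ + b₄ * c₄ * α₄₃ * c₃ = 1 / 8 ∧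
       b₃ * α₃₂ * c₂ ^ 2 + b₄ * α₄₂ * c₂ ^ 2 + b₄ * α₄₃ * c₃ ^ 2 = 1 / 12 ∧
       b₄ * α₄₃ * α₃₂ * c₂ = 1 / 24) ∧
      -- Z-part order-4 conditions
      (β₁ + β₂ + β₃ = 1 ∧
       β₂ * c₂ + β₃ * c₃ = 1 / 2 ∧
       β₂ * c₂ ^ 2 + β₃ * c₃ ^ 2 = 1 / 3 ∧
       β₃ * α₃₂ * c₂ = 1 / 6) := by
  rintro ⟨c₄, b₁, b₂, b₃, b₄, β₁, β₂, β₃, α₃₂, α₄₂, α₄₃, ⟨_, _, _, _, h5, _, h7, h8⟩,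
    ⟨_, k2, k3, k4⟩⟩
  have hne : α₃₂ * c₂ ≠ 0 := by
    intro h
    have : β₃ * α₃₂ * c₂ = β₃ * (α₃₂ * c₂) := by ring
    rw [this, h] at k4
    norm_num at k4
  have hb : 4 * (b₄ * α₄₃) = β₃ := by
    apply mul_right_cancel₀ hne
    linear_combination 4 * h8 - k4
  have h1 : b₄ * α₄₃ * (c₃ * (c₃ - c₂)) = 1 / 12 - c₂ / 6 := by
    linear_combination h7 - c₂ * h5
  have h2 : β₃ * (c₃ * (c₃ - c₂)) = 1 / 3 - c₂ / 2 := by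
    linear_combination k3 - c₂ * k2
  have h3 : c₂ = 0 := by
    linear_combination -6 * (c₃ * (c₃ - c₂)) * hb + 24 * h1 - 6 * h2
  exact hc₂.ne' h3
end
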